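/- arXiv:2507.17072 — 2 statements merged into one kernel-verified Lean document; each statement's English description precedes it below -/
import Mathlib

section
/- Let q be a prime power, let Q_n be a uniformly random monic polynomial of degree n over F_q, and let ω_q(Q) denote the number of distinct monic irreducible divisors of Q. Suppose there is a function Φ : (0,∞) → ℝ such that for every x > 0 there is a constant c_x with |E[x^{ω_q(Q_n)}] · e^{−(x−1) log n} − Φ(x)| ≤ c_x / n for all n ≥ 1 (mod-Poisson convergence at speed log n with remainder O_x(1/n)). Then there exists κ ∈ ℝ such that for every x > 0, Φ(x) = (e^{κ(x−1)} / Γ(x)) · ∏_{P} (1 + (x−1)/q^{deg P}) e^{−(x−1)/q^{deg P}}, the product running over all monic irreducible polynomials P of F_q[X] and being convergent. -/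
open Polynomial

/-- The number of distinct monic irreducible divisors of a polynomial over a field. -/
noncomputable def omegaPoly {F : Type*} [Field F] (Q : Polynomial F) : ℕ :=
  Nat.card {P : Polynomial F // P.Monic ∧ Irreducible P ∧ P ∣ Q}

/-- The monic polynomial of degree `n` over `F` with lower-order coefficients `a`:
`X^n + ∑_{i<n} a_i X^i`. Uniform choice of `a` gives the uniformly random monic
polynomial of degree `n`. -/
noncomputable def monicOf {F : Type*} [Field F] (n : ℕ) (a : Fin n → F) : Polynomial F :=
  X ^ n + ∑ i : Fin n, C (a i) * X ^ (i : ℕ)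

/-!
Write `u_P = (t / q) ^ deg P` and `E(y) = (1 + y) e^{-y}`. By unique factorization
`∑ n, E[x ^ ω(Q_n)] t ^ n = ∏ P, (1 + (x - 1) u_P) / (1 - u_P)` for `0 ≤ t < 1`, which for `x = 1`
is `(1 - t)⁻¹ = ∏ P, (1 - u_P)⁻¹`. Multiplying the first identity by the `-x`-th power of the second
gives
`(1 - t) ^ x * ∑ n, E[x ^ ω(Q_n)] t ^ n = (∏ P, E((x - 1) u_P)) * (∏ P, E(-u_P)) ^ (x - 1)`,
and as `t → 1⁻` both products on the right converge by domination, because the squares of the `u_P`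
stay summable at `t = 1`. If `E[x ^ ω(Q_n)] ~ φ n ^ (x - 1)`, the left side tends to `φ Γ(x)` by
comparison with the binomial series of `(1 - t) ^ (-x)`. Hence `κ = log ∏ P, E(-q ^ (-deg P))`.
-/

open Filter Topology Asymptotics

section Abelian

theorem summable_mul_pow_of_isBigO {a b : ℕ → ℝ} {t : ℝ} (hab : a =O[atTop] b)
    (hb : Summable fun n => b n * t ^ n) : Summable fun n => a n * t ^ n :=
  summable_of_isBigO_nat hb (hab.mul (isBigO_refl _ _))

theorem isLittleO_tsum_mul_pow {a b : ℕ → ℝ} (hb : ∀ n, 0 ≤ b n)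
    (hsum : ∀ t ∈ Set.Ioo (0 : ℝ) 1, Summable fun n => b n * t ^ n)
    (hdiv : Tendsto (fun t : ℝ => ∑' n, b n * t ^ n) (𝓝[<] 1) atTop) (hab : a =o[atTop] b) :
    (fun t : ℝ => ∑' n, a n * t ^ n) =o[𝓝[<] 1] fun t => ∑' n, b n * t ^ n := by
  rw [isLittleO_iff]
  intro ε hε
  obtain ⟨N, hN⟩ := eventually_atTop.1 (isLittleO_iff.1 hab (half_pos hε))
  set K := ∑ n ∈ Finset.range N, |a n|
  filter_upwards [Ioo_mem_nhdsLT zero_lt_one, hdiv.eventually_ge_atTop (K / (ε / 2))]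
    with t ht hK
  have hterm (n : ℕ) : ‖a n * t ^ n‖ ≤
      Set.indicator (Finset.range N) (fun n => |a n|) n + ε / 2 * (b n * t ^ n) := by
    have htn : 0 ≤ t ^ n := pow_nonneg ht.1.le n
    have htail : 0 ≤ ε / 2 * (b n * t ^ n) := by have := hb n; positivity
    rw [norm_mul, Real.norm_of_nonneg htn, Real.norm_eq_abs]
    by_cases hn : n < N
    · rw [Set.indicator_of_mem (by simpa using hn)]
      linarith [mul_le_of_le_one_right (abs_nonneg (a n)) (pow_le_one₀ (n := n) ht.1.le ht.2.le)]
    · rw [Set.indicator_of_notMem (by simpa using hn), zero_add, ← mul_assoc]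
      have := hN n (not_lt.1 hn)
      rw [Real.norm_eq_abs, Real.norm_of_nonneg (hb n)] at this
      exact mul_le_mul_of_nonneg_right this htn
  have hhead := hasSum_subtype_iff_indicator.1 ((Finset.range N).hasSum fun n => |a n|)
  have hB : 0 ≤ ∑' n, b n * t ^ n :=
    tsum_nonneg fun n => mul_nonneg (hb n) (pow_nonneg ht.1.le n)
  calc ‖∑' n, a n * t ^ n‖
      ≤ K + ε / 2 * ∑' n, b n * t ^ n :=
        tsum_of_norm_bounded (hhead.add ((hsum t ht).hasSum.mul_left _)) hterm
    _ ≤ ε / 2 * (∑' n, b n * t ^ n) + ε / 2 * ∑' n, b n * t ^ n := by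
        gcongr
        rwa [div_le_iff₀' (half_pos hε)] at hK
    _ = ε * ‖∑' n, b n * t ^ n‖ := by rw [Real.norm_of_nonneg hB]; ring

theorem tendsto_tsum_mul_pow_div_tsum_mul_pow {a b : ℕ → ℝ} {L : ℝ} (hb : ∀ n, 0 < b n)
    (hsum : ∀ t ∈ Set.Ioo (0 : ℝ) 1, Summable fun n => b n * t ^ n)
    (hdiv : Tendsto (fun t : ℝ => ∑' n, b n * t ^ n) (𝓝[<] 1) atTop)
    (hab : Tendsto (fun n => a n / b n) atTop (𝓝 L)) :
    Tendsto (fun t : ℝ => (∑' n, a n * t ^ n) / ∑' n, b n * t ^ n) (𝓝[<] 1) (𝓝 L) := by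
  have hO : a =O[atTop] b :=
    isBigO_of_div_tendsto_nhds (.of_forall fun n hn => absurd hn (hb n).ne') L hab
  have ho : (fun n => a n - L * b n) =o[atTop] b := by
    rw [isLittleO_iff_tendsto fun n hn => absurd hn (hb n).ne']
    refine (tendsto_sub_nhds_zero_iff.2 hab).congr fun n => ?_
    rw [sub_div, mul_div_cancel_right₀ _ (hb n).ne']
  have hlim := (isLittleO_tsum_mul_pow (fun n => (hb n).le) hsum hdiv ho).tendsto_div_nhds_zero
  rw [← tendsto_sub_nhds_zero_iff]
  refine hlim.congr' ?_
  filter_upwards [Ioo_mem_nhdsLT zero_lt_one, hdiv.eventually_gt_atTop 0] with t ht hB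
  have ha := summable_mul_pow_of_isBigO hO (hsum t ht)
  have hsub : ∑' n, (a n - L * b n) * t ^ n =
      (∑' n, a n * t ^ n) - L * ∑' n, b n * t ^ n := by
    simp only [sub_mul, mul_assoc]
    rw [ha.tsum_sub ((hsum t ht).mul_left L), tsum_mul_left]
  rw [hsub, sub_div, mul_div_cancel_right₀ _ hB.ne']

end Abelian

section Multichoose

theorem factorial_nsmul_multichoose_eq_prod {R : Type*} [CommRing R] [BinomialRing R]
    (x : R) (n : ℕ) :
    n.factorial • Ring.multichoose x n = ∏ j ∈ Finset.range n, (x + j) := by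
  rw [Ring.factorial_nsmul_multichoose_eq_ascPochhammer, ascPochhammer_smeval_eq_eval]
  induction n with
  | zero => simp
  | succ n ih => rw [ascPochhammer_succ_eval, Finset.prod_range_succ, ih]

theorem multichoose_eq_prod_div (x : ℝ) (n : ℕ) :
    Ring.multichoose x n = (∏ j ∈ Finset.range n, (x + j)) / n.factorial := by
  rw [← factorial_nsmul_multichoose_eq_prod, nsmul_eq_mul,
    mul_div_cancel_left₀ _ (Nat.cast_ne_zero.2 n.factorial_ne_zero)]

theorem multichoose_pos {x : ℝ} (hx : 0 < x) (n : ℕ) : 0 < Ring.multichoose x n := by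
  rw [multichoose_eq_prod_div]
  exact div_pos (Finset.prod_pos fun j _ => by positivity) (by positivity)

theorem hasSum_multichoose_mul_pow (x : ℝ) {t : ℝ} (ht : |t| < 1) :
    HasSum (fun n => Ring.multichoose x n * t ^ n) (((1 - t) ^ x)⁻¹) := by
  have h := (Real.one_div_one_sub_rpow_hasFPowerSeriesOnBall_zero x).hasSum (y := t) (by
    simpa [enorm_eq_nnnorm, ← NNReal.coe_lt_coe] using ht)
  simpa [FormalMultilinearSeries.ofScalars, ← Ring.multichoose_eq] using h

theorem tendsto_rpow_div_multichoose {x : ℝ} (hx : 0 < x) :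
    Tendsto (fun n : ℕ => (n : ℝ) ^ (x - 1) / Ring.multichoose x n) atTop (𝓝 (Real.Gamma x)) := by
  have hratio : Tendsto (fun n : ℕ => x / n + 1) atTop (𝓝 1) := by
    simpa using (tendsto_const_div_atTop_nhds_zero_nat x).add_const 1
  have hlim := (Real.GammaSeq_tendsto_Gamma x).mul hratio
  rw [mul_one] at hlim
  refine hlim.congr' ?_
  filter_upwards [eventually_gt_atTop 0] with n hn
  have hn' : (0 : ℝ) < n := Nat.cast_pos.2 hn
  have hprod : ∏ j ∈ Finset.range n, (x + (j : ℝ)) ≠ 0 :=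
    Finset.prod_ne_zero_iff.2 fun j _ => by positivity
  have hxn : x + n ≠ 0 := by positivity
  rw [Real.GammaSeq, multichoose_eq_prod_div, Finset.prod_range_succ, Real.rpow_sub_one hn'.ne']
  field_simp

theorem tendsto_one_sub_rpow_nhdsLT_one {x : ℝ} (hx : 0 < x) :
    Tendsto (fun t : ℝ => (1 - t) ^ x) (𝓝[<] 1) (𝓝[>] 0) := by
  refine tendsto_nhdsWithin_iff.2 ⟨?_, ?_⟩
  · have hcont : ContinuousAt (fun t : ℝ => (1 - t) ^ x) 1 :=
      ContinuousAt.rpow_const (by fun_prop) (Or.inr hx.le)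
    simpa [Real.zero_rpow hx.ne'] using hcont.tendsto.mono_left nhdsWithin_le_nhds
  · filter_upwards [self_mem_nhdsWithin] with t ht
    exact Real.rpow_pos_of_pos (sub_pos.2 ht) x

variable {x L : ℝ} {a : ℕ → ℝ}

theorem tendsto_div_multichoose (hx : 0 < x)
    (ha : Tendsto (fun n : ℕ => a n / (n : ℝ) ^ (x - 1)) atTop (𝓝 L)) :
    Tendsto (fun n => a n / Ring.multichoose x n) atTop (𝓝 (L * Real.Gamma x)) := by
  refine (ha.mul (tendsto_rpow_div_multichoose hx)).congr' ?_
  filter_upwards [eventually_gt_atTop 0] with n hn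
  exact div_mul_div_cancel₀ (Real.rpow_pos_of_pos (Nat.cast_pos.2 hn) _).ne'

theorem summable_mul_pow_of_tendsto_div_rpow (hx : 0 < x)
    (ha : Tendsto (fun n : ℕ => a n / (n : ℝ) ^ (x - 1)) atTop (𝓝 L)) {t : ℝ} (ht : |t| < 1) :
    Summable fun n => a n * t ^ n :=
  summable_mul_pow_of_isBigO
    (isBigO_of_div_tendsto_nhds (.of_forall fun n hn => absurd hn (multichoose_pos hx n).ne') _
      (tendsto_div_multichoose hx ha))
    (hasSum_multichoose_mul_pow x ht).summable

theorem tendsto_one_sub_rpow_mul_tsum (hx : 0 < x)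
    (ha : Tendsto (fun n : ℕ => a n / (n : ℝ) ^ (x - 1)) atTop (𝓝 L)) :
    Tendsto (fun t : ℝ => (1 - t) ^ x * ∑' n, a n * t ^ n) (𝓝[<] 1) (𝓝 (L * Real.Gamma x)) := by
  have hsum (t : ℝ) (ht : t ∈ Set.Ioo (0 : ℝ) 1) :=
    hasSum_multichoose_mul_pow x (abs_lt.2 ⟨by linarith [ht.1], ht.2⟩)
  have htsum : (fun t : ℝ => ((1 - t) ^ x)⁻¹) =ᶠ[𝓝[<] 1]
      fun t => ∑' n, Ring.multichoose x n * t ^ n := by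
    filter_upwards [Ioo_mem_nhdsLT zero_lt_one] with t ht using (hsum t ht).tsum_eq.symm
  have hdiv := (tendsto_one_sub_rpow_nhdsLT_one hx).inv_tendsto_nhdsGT_zero.congr' htsum
  have hlim := tendsto_tsum_mul_pow_div_tsum_mul_pow (multichoose_pos hx)
    (fun t ht => (hsum t ht).summable) hdiv (tendsto_div_multichoose hx ha)
  refine hlim.congr' ?_
  filter_upwards [htsum] with t ht
  rw [← ht, div_inv_eq_mul, mul_comm]

end Multichoose

section EulerProduct

theorem prod_sum_eq_sum_finsupp_prod {I M R : Type*} [Zero M] [CommSemiring R] {f : I → M → R}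
    (hf : ∀ i, f i 0 = 1) (S : Finset I) (T : Finset M) :
    ∏ i ∈ S, ∑ k ∈ T, f i k = ∑ e ∈ S.finsupp fun _ => T, e.prod f := by
  classical
  rw [Finset.finsupp, Finset.sum_map, Finset.prod_sum]
  refine Finset.sum_congr (by congr!) fun p _ => ?_
  rw [Function.Embedding.coeFn_mk,
    Finsupp.prod_of_support_subset _ (Finsupp.support_indicator_subset _ _) _ fun i _ => hf i,
    ← Finset.prod_attach S]
  exact Finset.prod_congr rfl fun i _ => by rw [Finsupp.indicator_of_mem i.2]

theorem exists_subset_finsupp {I M : Type*} [Zero M] (E : Finset (I →₀ M)) :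
    ∃ (S : Finset I) (T : Finset M), E ⊆ S.finsupp fun _ => T := by
  classical
  refine ⟨E.biUnion Finsupp.support, E.biUnion fun e => (E.biUnion Finsupp.support).image e,
    fun e he => Finset.mem_finsupp_iff.2 ⟨Finset.subset_biUnion_of_mem _ he, fun i hi => ?_⟩⟩
  exact Finset.mem_biUnion.2 ⟨e, he, Finset.mem_image_of_mem e hi⟩

theorem hasProd_of_hasSum_finsupp_prod {I M : Type*} [Zero M] {f : I → M → ℝ} {g : I → ℝ} {W : ℝ}
    (hf : ∀ i k, 0 ≤ f i k) (hf₀ : ∀ i, f i 0 = 1) (hg : ∀ i, HasSum (f i) (g i))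
    (hW : HasSum (fun e : I →₀ M => e.prod f) W) : HasProd g W := by
  have hprod (e : I →₀ M) : 0 ≤ e.prod f := Finset.prod_nonneg fun i _ => hf i _
  have hone (i : I) : 1 ≤ g i := hf₀ i ▸ le_hasSum (hg i) 0 fun k _ => hf i k
  rw [HasProd, SummationFilter.unconditional_filter]
  refine tendsto_atTop_isLUB (fun S S' h => Finset.prod_mono_set_of_one_le hone h) ⟨?_, ?_⟩
  · rintro _ ⟨S, rfl⟩
    refine le_of_tendsto' (tendsto_finsetProd S fun i _ => hg i) fun T => ?_
    rw [prod_sum_eq_sum_finsupp_prod hf₀]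
    exact sum_le_hasSum _ (fun e _ => hprod e) hW
  · intro B hB
    refine hasSum_le_of_sum_le hW fun E => ?_
    obtain ⟨S, T, hE⟩ := exists_subset_finsupp E
    calc ∑ e ∈ E, e.prod f
        ≤ ∑ e ∈ S.finsupp fun _ => T, e.prod f :=
          Finset.sum_le_sum_of_subset_of_nonneg hE fun e _ _ => hprod e
      _ = ∏ i ∈ S, ∑ k ∈ T, f i k := (prod_sum_eq_sum_finsupp_prod hf₀ S T).symm
      _ ≤ ∏ i ∈ S, g i :=
          Finset.prod_le_prod (fun i _ => Finset.sum_nonneg fun k _ => hf i k)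
            fun i _ => sum_le_hasSum _ (fun k _ => hf i k) (hg i)
      _ ≤ B := hB ⟨S, rfl⟩

end EulerProduct

section WeierstrassFactor

/-- The genus-one Weierstrass factor `(1 + y) e^{-y}`, whose infinite products converge as soon as
the squares of the arguments are summable. -/
noncomputable def weierstrassFactor (y : ℝ) : ℝ := (1 + y) * Real.exp (-y)

theorem abs_weierstrassFactor_sub_one_le {y : ℝ} (hy : -1 ≤ y) :
    |weierstrassFactor y - 1| ≤ y ^ 2 := by
  have hle : weierstrassFactor y ≤ 1 := by
    rw [weierstrassFactor, Real.exp_neg, ← div_eq_mul_inv, div_le_one (Real.exp_pos y), add_comm]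
    exact Real.add_one_le_exp y
  have hge : (1 + y) * (1 - y) ≤ weierstrassFactor y :=
    mul_le_mul_of_nonneg_left (Real.one_sub_le_exp_neg y) (by linarith)
  rw [abs_le]
  constructor <;> nlinarith

variable {I : Type*} {z : I → ℝ}

theorem summable_weierstrassFactor_sub_one (hz : ∀ i, -1 ≤ z i) (hsq : Summable fun i => z i ^ 2) :
    Summable fun i => weierstrassFactor (z i) - 1 :=
  hsq.of_norm_bounded fun i => abs_weierstrassFactor_sub_one_le (hz i)

theorem multipliable_weierstrassFactor (hz : ∀ i, -1 ≤ z i) (hsq : Summable fun i => z i ^ 2) :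
    Multipliable fun i => weierstrassFactor (z i) := by
  simpa using Real.multipliable_one_add_of_summable (summable_weierstrassFactor_sub_one hz hsq)

theorem tprod_weierstrassFactor_pos (hz : ∀ i, -1 < z i) (hsq : Summable fun i => z i ^ 2) :
    0 < ∏' i, weierstrassFactor (z i) := by
  have hlog := Real.summable_log_one_add_of_summable
    (summable_weierstrassFactor_sub_one (fun i => (hz i).le) hsq)
  simp only [add_sub_cancel] at hlog
  have hpos (i : I) : 0 < weierstrassFactor (z i) :=
    mul_pos (by linarith [hz i]) (Real.exp_pos _)
  rw [← Real.rexp_tsum_eq_tprod hpos hlog]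
  exact Real.exp_pos _

theorem tendsto_tprod_weierstrassFactor {α : Type*} {l : Filter α} {ζ : α → I → ℝ} {b : I → ℝ}
    (hb : Summable b) (hlim : ∀ i, Tendsto (ζ · i) l (𝓝 (z i)))
    (hbound : ∀ᶠ t in l, ∀ i, -1 ≤ ζ t i ∧ ζ t i ^ 2 ≤ b i) :
    Tendsto (fun t => ∏' i, weierstrassFactor (ζ t i)) l (𝓝 (∏' i, weierstrassFactor (z i))) := by
  have hcont : Continuous fun y => weierstrassFactor y - 1 := by
    unfold weierstrassFactor; fun_prop
  simpa using tendsto_tprod_one_add_of_dominated_convergence hb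
    (fun i => (hcont.tendsto (z i)).comp (hlim i))
    (hbound.mono fun t ht i => (abs_weierstrassFactor_sub_one_le (ht i).1).trans (ht i).2)

theorem hasProd_weierstrassFactor {A : ℝ} (hz : Summable z) (hA : HasProd (fun i => 1 + z i) A) :
    HasProd (fun i => weierstrassFactor (z i)) (A * Real.exp (-∑' i, z i)) :=
  hA.mul hz.hasSum.neg.rexp

-- The exponentials contribute `exp (-(x - 1) ∑ u)` to the first product and its inverse to the
-- second factor, so the identity stays uniform as `∑ u` diverges.
theorem tprod_weierstrassFactor_mul_rpow {u : I → ℝ} {x s W : ℝ} (hu : Summable u)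
    (hu₁ : ∀ i, u i < 1) (hs : 0 < s) (h₁ : HasProd (fun i => 1 / (1 - u i)) s⁻¹)
    (hW : HasProd (fun i => (1 + (x - 1) * u i) / (1 - u i)) W) :
    (∏' i, weierstrassFactor ((x - 1) * u i)) * (∏' i, weierstrassFactor (-u i)) ^ (x - 1) =
      s ^ x * W := by
  have hden : HasProd (fun i => 1 + -u i) s := by
    simpa [← sub_eq_add_neg] using h₁.inv₀ (inv_ne_zero hs.ne')
  have hnum : HasProd (fun i => 1 + (x - 1) * u i) (W * s) := by
    refine (hW.mul hden).congr_fun fun i => ?_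
    rw [← sub_eq_add_neg, div_mul_cancel₀ _ (sub_pos.2 (hu₁ i)).ne']
  rw [(hasProd_weierstrassFactor (hu.mul_left _) hnum).tprod_eq,
    (hasProd_weierstrassFactor hu.neg hden).tprod_eq, tsum_mul_left, tsum_neg, neg_neg,
    Real.mul_rpow hs.le (Real.exp_pos _).le, ← Real.exp_mul, Real.rpow_sub_one hs.ne']
  have hexp : Real.exp (-((x - 1) * ∑' i, u i)) * Real.exp ((∑' i, u i) * (x - 1)) = 1 := by
    rw [← Real.exp_add, mul_comm, add_comm, add_neg_cancel, Real.exp_zero]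
  calc _ = W * (s * (s ^ x / s)) * (Real.exp (-((x - 1) * ∑' i, u i)) *
        Real.exp ((∑' i, u i) * (x - 1))) := by ring
    _ = s ^ x * W := by rw [hexp, mul_div_cancel₀ _ hs.ne', mul_one, mul_comm]

end WeierstrassFactor

section MonicPolynomials

variable {F : Type*} [Field F]

/-- The primes of `F[X]`, each represented by its monic generator. -/
abbrev MonicIrreducible (F : Type*) [Field F] := {P : F[X] // P.Monic ∧ Irreducible P}

/-- The monic polynomial with prescribed prime factorization: `∏ P ^ e P`. -/
noncomputable def monicOfFactorization (e : MonicIrreducible F →₀ ℕ) : F[X] :=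
  e.prod fun P k => (P : F[X]) ^ k

theorem monic_monicOfFactorization (e : MonicIrreducible F →₀ ℕ) :
    (monicOfFactorization e).Monic :=
  monic_prod_of_monic _ _ fun P _ => P.2.1.pow _

theorem natDegree_monicOfFactorization (e : MonicIrreducible F →₀ ℕ) :
    (monicOfFactorization e).natDegree = e.sum fun P k => k * (P : F[X]).natDegree :=
  (natDegree_prod_of_monic _ _ fun P _ => P.2.1.pow _).trans <|
    Finset.sum_congr rfl fun P _ => P.2.1.natDegree_pow _

theorem dvd_monicOfFactorization_iff (P : MonicIrreducible F) (e : MonicIrreducible F →₀ ℕ) :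
    (P : F[X]) ∣ monicOfFactorization e ↔ P ∈ e.support := by
  refine ⟨fun h => ?_, fun h =>
    (dvd_pow_self _ (Finsupp.mem_support_iff.1 h)).trans (Finset.dvd_prod_of_mem _ h)⟩
  obtain ⟨R, hR, hdvd⟩ := (Prime.dvd_finsetProd_iff P.2.2.prime _).1 h
  have hassoc := P.2.2.associated_of_dvd R.2.2 (P.2.2.prime.dvd_of_dvd_pow hdvd)
  rwa [Subtype.ext (eq_of_monic_of_associated P.2.1 R.2.1 hassoc)]

theorem omegaPoly_monicOfFactorization (e : MonicIrreducible F →₀ ℕ) :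
    omegaPoly (monicOfFactorization e) = e.support.card := by
  rw [omegaPoly, ← Nat.card_eq_finsetCard]
  exact Nat.card_congr
    { toFun P := ⟨⟨P.1, P.2.1, P.2.2.1⟩, (dvd_monicOfFactorization_iff _ e).1 P.2.2.2⟩
      invFun P := ⟨P.1.1, P.1.2.1, P.1.2.2, (dvd_monicOfFactorization_iff _ e).2 P.2⟩ }

theorem monicOfFactorization_toFinsupp [DecidableEq (MonicIrreducible F)]
    (m : Multiset (MonicIrreducible F)) :
    monicOfFactorization m.toFinsupp = (m.map Subtype.val).prod := by
  conv_rhs => rw [← Multiset.toFinsupp_toMultiset m, Finsupp.toMultiset_map,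
    Finsupp.prod_toMultiset, Finsupp.prod_mapDomain_index (by simp) (by simp [pow_add])]
  rfl

theorem normalizedFactors_monicOfFactorization [DecidableEq F] (e : MonicIrreducible F →₀ ℕ) :
    UniqueFactorizationMonoid.normalizedFactors (monicOfFactorization e) =
      e.toMultiset.map Subtype.val := by
  classical
  rw [← Finsupp.toMultiset_toFinsupp e, monicOfFactorization_toFinsupp,
    Multiset.toFinsupp_toMultiset, UniqueFactorizationMonoid.normalizedFactors_prod_eq,
    Multiset.map_map]
  · exact Multiset.map_congr rfl fun P _ => P.2.1.normalize_eq_self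
  · simp +contextual

theorem monicOfFactorization_injective :
    Function.Injective (monicOfFactorization : (MonicIrreducible F →₀ ℕ) → F[X]) := by
  classical
  intro e e' h
  have hmap := congrArg UniqueFactorizationMonoid.normalizedFactors h
  simp only [normalizedFactors_monicOfFactorization] at hmap
  exact Multiset.toFinsupp.symm.injective (Multiset.map_injective Subtype.val_injective hmap)

theorem exists_monicOfFactorization_eq {Q : F[X]} (hQ : Q.Monic) :
    ∃ e : MonicIrreducible F →₀ ℕ, monicOfFactorization e = Q := by
  classical
  have hfactor (P : F[X]) (hP : P ∈ UniqueFactorizationMonoid.normalizedFactors Q) :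
      P.Monic ∧ Irreducible P := by
    have hirr := UniqueFactorizationMonoid.irreducible_of_normalized_factor P hP
    rw [← UniqueFactorizationMonoid.normalize_normalized_factor P hP]
    exact ⟨monic_normalize hirr.ne_zero, (normalize_associated P).symm.irreducible hirr⟩
  obtain ⟨m, hm⟩ : ∃ m : Multiset (MonicIrreducible F),
      m.map Subtype.val = UniqueFactorizationMonoid.normalizedFactors Q := CanLift.prf _ hfactor
  have hassoc : Associated (monicOfFactorization m.toFinsupp) Q := by
    rw [monicOfFactorization_toFinsupp, hm]
    exact UniqueFactorizationMonoid.prod_normalizedFactors hQ.ne_zero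
  exact ⟨m.toFinsupp, eq_of_monic_of_associated (monic_monicOfFactorization _) hQ hassoc⟩

/-- Unique factorization: monic polynomials correspond to exponent vectors. -/
noncomputable def monicOfFactorizationEquiv :
    (MonicIrreducible F →₀ ℕ) ≃ {Q : F[X] // Q.Monic} :=
  .ofBijective (fun e => ⟨monicOfFactorization e, monic_monicOfFactorization e⟩)
    ⟨fun _ _ h => monicOfFactorization_injective (congrArg Subtype.val h), fun Q =>
      (exists_monicOfFactorization_eq Q.2).imp fun _ => Subtype.ext⟩

theorem natDegree_monicOf (n : ℕ) (a : Fin n → F) : (monicOf n a).natDegree = n := by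
  refine natDegree_eq_of_degree_eq_some ?_
  rw [monicOf, degree_add_eq_left_of_degree_lt, degree_X_pow]
  exact (degree_sum_fin_lt a).trans_eq (degree_X_pow n).symm

theorem monic_monicOf (n : ℕ) (a : Fin n → F) : (monicOf n a).Monic :=
  monic_X_pow_add (degree_sum_fin_lt a)

theorem coeff_monicOf {n : ℕ} (a : Fin n → F) (i : Fin n) : (monicOf n a).coeff i = a i := by
  simp [monicOf, coeff_X_pow, i.2.ne, Fin.val_inj]

theorem monicOf_coeff_of_monic {Q : F[X]} (hQ : Q.Monic) :
    monicOf Q.natDegree (fun i => Q.coeff i) = Q := by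
  conv_rhs => rw [hQ.as_sum]
  rw [monicOf, Fin.sum_univ_eq_sum_range fun i => C (Q.coeff i) * X ^ i]

theorem monicOf_sigma_injective :
    Function.Injective fun p : Σ n : ℕ, Fin n → F => monicOf p.1 p.2 := by
  rintro ⟨n, a⟩ ⟨m, b⟩ (h : monicOf n a = monicOf m b)
  obtain rfl : n = m := by rw [← natDegree_monicOf n a, h, natDegree_monicOf]
  congr 1
  ext i
  rw [← coeff_monicOf a i, h, coeff_monicOf]

/-- Monic polynomials are parametrized by their degree and their lower-order coefficients. -/
noncomputable def monicOfEquiv : (Σ n : ℕ, Fin n → F) ≃ {Q : F[X] // Q.Monic} :=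
  .ofBijective (fun p => ⟨monicOf p.1 p.2, monic_monicOf p.1 p.2⟩)
    ⟨fun _ _ h => monicOf_sigma_injective (congrArg Subtype.val h),
      fun Q => ⟨⟨Q.1.natDegree, fun i => Q.1.coeff i⟩, Subtype.ext (monicOf_coeff_of_monic Q.2)⟩⟩

theorem hasSum_monic_of_nonneg [Fintype F] {w : F[X] → ℝ} (hw : ∀ Q, 0 ≤ w Q)
    (hs : Summable fun n => ∑ a : Fin n → F, w (monicOf n a)) :
    HasSum (fun Q : {Q : F[X] // Q.Monic} => w Q) (∑' n, ∑ a : Fin n → F, w (monicOf n a)) := by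
  have hsigma : Summable fun p : Σ n : ℕ, Fin n → F => w (monicOf p.1 p.2) :=
    (summable_sigma_of_nonneg fun p => hw _).2
      ⟨fun n => .of_finite, by simpa only [tsum_fintype] using hs⟩
  rw [← monicOfEquiv.hasSum_iff]
  exact hsigma.hasSum_iff.2 (hsigma.tsum_sigma.trans (by simp only [tsum_fintype]))

end MonicPolynomials

section EulerFactor

/-- The coefficient of `P ^ k` in the Euler factor of `∑ x ^ ω(Q)` at a prime `P`, where `u` is
the weight of `P`. -/
noncomputable def eulerTerm (x u : ℝ) (k : ℕ) : ℝ := if k = 0 then 1 else x * u ^ k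

theorem eulerTerm_zero (x u : ℝ) : eulerTerm x u 0 = 1 := if_pos rfl

theorem eulerTerm_nonneg {x u : ℝ} (hx : 0 ≤ x) (hu : 0 ≤ u) (k : ℕ) : 0 ≤ eulerTerm x u k := by
  unfold eulerTerm
  split_ifs <;> positivity

theorem hasSum_eulerTerm (x : ℝ) {u : ℝ} (hu : |u| < 1) :
    HasSum (eulerTerm x u) ((1 + (x - 1) * u) / (1 - u)) := by
  have hu' : 1 - u ≠ 0 := (sub_pos.2 (abs_lt.1 hu).2).ne'
  have hsum := ((hasSum_geometric_of_abs_lt_one hu).mul_left x).add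
    (hasSum_ite_eq (0 : ℕ) (1 - x))
  have hvalue : x * (1 - u)⁻¹ + (1 - x) = (1 + (x - 1) * u) / (1 - u) := by
    field_simp
    ring
  rw [hvalue] at hsum
  refine hsum.congr_fun fun k => ?_
  by_cases hk : k = 0 <;> simp [eulerTerm, hk]

theorem prod_eulerTerm_eq {F : Type*} [Field F] (x s : ℝ) (e : MonicIrreducible F →₀ ℕ) :
    (e.prod fun P k => eulerTerm x (s ^ (P : F[X]).natDegree) k) =
      x ^ omegaPoly (monicOfFactorization e) * s ^ (monicOfFactorization e).natDegree := by
  rw [omegaPoly_monicOfFactorization, natDegree_monicOfFactorization, Finsupp.sum,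
    ← Finset.prod_const, ← Finset.prod_pow_eq_pow_sum, ← Finset.prod_mul_distrib]
  refine Finset.prod_congr rfl fun P hP => ?_
  simp only [eulerTerm, if_neg (Finsupp.mem_support_iff.1 hP), ← pow_mul, mul_comm (e P)]

end EulerFactor

section GeneratingFunction

variable (F : Type*) [Field F] [Fintype F]

/-- The probability generating function `E[x ^ ω_q(Q_n)]` of the number of distinct prime factors
of a uniformly random monic polynomial of degree `n`. -/
noncomputable def omegaPGF (x : ℝ) (n : ℕ) : ℝ :=
  (∑ a : Fin n → F, x ^ omegaPoly (monicOf n a)) / (Fintype.card F : ℝ) ^ n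

theorem omegaPGF_one (n : ℕ) : omegaPGF F 1 n = 1 := by
  simp [omegaPGF]

variable {F}

/-- The weight `(t / q) ^ deg P` of a prime `P`; at `t = 1` it is the density `q ^ (-deg P)` of the
multiples of `P`. -/
noncomputable def irrWeight (t : ℝ) (P : MonicIrreducible F) : ℝ :=
  (t / Fintype.card F) ^ (P : F[X]).natDegree

variable {x t : ℝ}

theorem irrWeight_nonneg (ht : 0 ≤ t) (P : MonicIrreducible F) : 0 ≤ irrWeight t P := by
  unfold irrWeight
  positivity

theorem irrWeight_le_irrWeight {t' : ℝ} (ht : 0 ≤ t) (h : t ≤ t') (P : MonicIrreducible F) :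
    irrWeight t P ≤ irrWeight t' P := by
  unfold irrWeight
  gcongr

theorem irrWeight_lt_one (ht : 0 ≤ t) (ht₁ : t ≤ 1) (P : MonicIrreducible F) :
    irrWeight t P < 1 := by
  have hq : (1 : ℝ) < Fintype.card F := by exact_mod_cast Fintype.one_lt_card
  exact pow_lt_one₀ (by positivity) ((div_lt_one (by positivity)).2 (ht₁.trans_lt hq))
    P.2.2.natDegree_pos.ne'

theorem irrWeight_one_sq (P : MonicIrreducible F) :
    irrWeight 1 P ^ 2 = irrWeight (1 / Fintype.card F) P := by
  rw [irrWeight, irrWeight, ← pow_mul, mul_comm, pow_mul, sq, one_div, div_eq_mul_inv]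

theorem continuous_irrWeight (P : MonicIrreducible F) : Continuous fun t => irrWeight t P := by
  unfold irrWeight
  fun_prop

theorem hasSum_prod_eulerTerm (hx : 0 ≤ x) (ht : 0 ≤ t)
    (hs : Summable fun n => omegaPGF F x n * t ^ n) :
    HasSum (fun e : MonicIrreducible F →₀ ℕ => e.prod fun P k => eulerTerm x (irrWeight t P) k)
      (∑' n, omegaPGF F x n * t ^ n) := by
  set s : ℝ := t / Fintype.card F
  have hsum (n : ℕ) : omegaPGF F x n * t ^ n =
      ∑ a : Fin n → F, x ^ omegaPoly (monicOf n a) * s ^ (monicOf n a).natDegree := by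
    simp only [natDegree_monicOf, ← Finset.sum_mul, omegaPGF, s, div_pow]
    ring
  simp only [hsum] at hs ⊢
  have hmonic := hasSum_monic_of_nonneg (w := fun Q => x ^ omegaPoly Q * s ^ Q.natDegree)
    (fun Q => by positivity) hs
  exact (monicOfFactorizationEquiv.hasSum_iff.2 hmonic).congr_fun fun e => prod_eulerTerm_eq x s e

theorem hasProd_eulerFactor (hx : 0 ≤ x) (ht : 0 ≤ t) (ht₁ : t < 1)
    (hs : Summable fun n => omegaPGF F x n * t ^ n) :
    HasProd (fun P : MonicIrreducible F => (1 + (x - 1) * irrWeight t P) / (1 - irrWeight t P))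
      (∑' n, omegaPGF F x n * t ^ n) :=
  hasProd_of_hasSum_finsupp_prod (fun P k => eulerTerm_nonneg hx (irrWeight_nonneg ht P) k)
    (fun _ => eulerTerm_zero x _)
    (fun P => hasSum_eulerTerm x <|
      (abs_of_nonneg (irrWeight_nonneg ht P)).trans_lt (irrWeight_lt_one ht ht₁.le P))
    (hasSum_prod_eulerTerm hx ht hs)

theorem hasSum_omegaPGF_one_mul_pow (ht : 0 ≤ t) (ht₁ : t < 1) :
    HasSum (fun n => omegaPGF F 1 n * t ^ n) (1 - t)⁻¹ := by
  simpa only [omegaPGF_one, one_mul] using hasSum_geometric_of_lt_one ht ht₁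

theorem summable_irrWeight (ht : 0 ≤ t) (ht₁ : t < 1) :
    Summable fun P : MonicIrreducible F => irrWeight t P := by
  have hsum := hasSum_prod_eulerTerm (F := F) zero_le_one ht
    (hasSum_omegaPGF_one_mul_pow ht ht₁).summable
  refine (hsum.summable.comp_injective (Finsupp.single_left_injective one_ne_zero)).congr
    fun P => ?_
  simp [eulerTerm, Finsupp.prod_single_index]

theorem summable_irrWeight_one_sq : Summable fun P : MonicIrreducible F => irrWeight 1 P ^ 2 := by
  have hq : (1 : ℝ) < Fintype.card F := by exact_mod_cast Fintype.one_lt_card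
  simp only [irrWeight_one_sq]
  exact summable_irrWeight (by positivity) ((div_lt_one (by positivity)).2 hq)

theorem hasProd_one_div_one_sub_irrWeight (ht : 0 ≤ t) (ht₁ : t < 1) :
    HasProd (fun P : MonicIrreducible F => 1 / (1 - irrWeight t P)) (1 - t)⁻¹ := by
  have hone := hasSum_omegaPGF_one_mul_pow (F := F) ht ht₁
  simpa [hone.tsum_eq] using hasProd_eulerFactor (F := F) zero_le_one ht ht₁ hone.summable

theorem tprod_weierstrassFactor_irrWeight (hx : 0 ≤ x) (ht : 0 ≤ t) (ht₁ : t < 1)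
    (hs : Summable fun n => omegaPGF F x n * t ^ n) :
    (∏' P : MonicIrreducible F, weierstrassFactor ((x - 1) * irrWeight t P)) *
        (∏' P : MonicIrreducible F, weierstrassFactor (-irrWeight t P)) ^ (x - 1) =
      (1 - t) ^ x * ∑' n, omegaPGF F x n * t ^ n :=
  tprod_weierstrassFactor_mul_rpow (summable_irrWeight ht ht₁) (irrWeight_lt_one ht ht₁.le)
    (sub_pos.2 ht₁) (hasProd_one_div_one_sub_irrWeight ht ht₁) (hasProd_eulerFactor hx ht ht₁ hs)

theorem neg_one_lt_mul_irrWeight (hx : 0 ≤ x) (ht : 0 ≤ t) (ht₁ : t ≤ 1)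
    (P : MonicIrreducible F) : -1 < (x - 1) * irrWeight t P := by
  nlinarith [irrWeight_nonneg ht P, irrWeight_lt_one ht ht₁ P]

theorem summable_mul_irrWeight_one_sq (c : ℝ) :
    Summable fun P : MonicIrreducible F => (c * irrWeight 1 P) ^ 2 := by
  simpa only [mul_pow] using summable_irrWeight_one_sq.mul_left (c ^ 2)

theorem tendsto_tprod_weierstrassFactor_irrWeight (hx : 0 ≤ x) :
    Tendsto (fun t => ∏' P : MonicIrreducible F, weierstrassFactor ((x - 1) * irrWeight t P))
      (𝓝[<] 1) (𝓝 (∏' P : MonicIrreducible F, weierstrassFactor ((x - 1) * irrWeight 1 P))) := by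
  refine tendsto_tprod_weierstrassFactor (summable_mul_irrWeight_one_sq (x - 1))
    (fun P => ?_) ?_
  · exact ((continuous_irrWeight P).const_mul (x - 1)).continuousWithinAt.tendsto
  · filter_upwards [Ioo_mem_nhdsLT zero_lt_one] with t ht P
    refine ⟨(neg_one_lt_mul_irrWeight hx ht.1.le ht.2.le P).le, ?_⟩
    have hnonneg := irrWeight_nonneg ht.1.le P
    rw [mul_pow, mul_pow]
    gcongr
    exact irrWeight_le_irrWeight ht.1.le ht.2.le P

theorem multipliable_weierstrassFactor_irrWeight_one (hx : 0 ≤ x) :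
    Multipliable fun P : MonicIrreducible F => weierstrassFactor ((x - 1) * irrWeight 1 P) :=
  multipliable_weierstrassFactor
    (fun P => (neg_one_lt_mul_irrWeight hx zero_le_one le_rfl P).le)
    (summable_mul_irrWeight_one_sq (x - 1))

variable (F) in
/-- The product `∏ (1 - q ^ (-deg P)) exp (q ^ (-deg P))` over the primes, whose logarithm is `κ`;
over the integers that logarithm is `M - γ`, with `M` the Meissel–Mertens constant. -/
noncomputable def mertensProduct : ℝ :=
  ∏' P : MonicIrreducible F, weierstrassFactor (-irrWeight 1 P)

theorem mertensProduct_pos : 0 < mertensProduct F :=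
  tprod_weierstrassFactor_pos (fun P => neg_lt_neg (irrWeight_lt_one zero_le_one le_rfl P))
    (by simpa only [neg_sq] using summable_irrWeight_one_sq)

theorem tendsto_tprod_weierstrassFactor_neg_irrWeight :
    Tendsto (fun t => ∏' P : MonicIrreducible F, weierstrassFactor (-irrWeight t P))
      (𝓝[<] 1) (𝓝 (mertensProduct F)) := by
  simpa [mertensProduct] using tendsto_tprod_weierstrassFactor_irrWeight (F := F) le_rfl

theorem mul_Gamma_eq_of_tendsto_omegaPGF {φ : ℝ} (hx : 0 < x)
    (hφ : Tendsto (fun n : ℕ => omegaPGF F x n / (n : ℝ) ^ (x - 1)) atTop (𝓝 φ)) :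
    φ * Real.Gamma x =
      (∏' P : MonicIrreducible F, weierstrassFactor ((x - 1) * irrWeight 1 P)) *
        mertensProduct F ^ (x - 1) := by
  have hmertens := (tendsto_tprod_weierstrassFactor_neg_irrWeight (F := F)).rpow_const
    (p := x - 1) (Or.inl mertensProduct_pos.ne')
  have hprod := (tendsto_tprod_weierstrassFactor_irrWeight (F := F) hx.le).mul hmertens
  refine tendsto_nhds_unique (tendsto_one_sub_rpow_mul_tsum hx hφ) (hprod.congr' ?_)
  filter_upwards [Ioo_mem_nhdsLT zero_lt_one] with t ht
  have hsum := summable_mul_pow_of_tendsto_div_rpow hx hφ (abs_lt.2 ⟨by linarith [ht.1], ht.2⟩)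
  exact tprod_weierstrassFactor_irrWeight hx.le ht.1.le ht.2 hsum

theorem weierstrassFactor_mul_irrWeight_one (P : MonicIrreducible F) :
    weierstrassFactor ((x - 1) * irrWeight 1 P) =
      (1 + (x - 1) / (Fintype.card F : ℝ) ^ (P : F[X]).natDegree) *
        Real.exp (-(x - 1) / (Fintype.card F : ℝ) ^ (P : F[X]).natDegree) := by
  rw [weierstrassFactor, irrWeight, one_div, inv_pow, ← div_eq_mul_inv, neg_div]

end GeneratingFunction

theorem tendsto_of_abs_sub_le_div {f : ℕ → ℝ} {L c : ℝ}
    (h : ∀ n : ℕ, 1 ≤ n → |f n - L| ≤ c / n) : Tendsto f atTop (𝓝 L) :=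
  tendsto_iff_norm_sub_tendsto_zero.2 <| squeeze_zero' (.of_forall fun _ => norm_nonneg _)
    (eventually_atTop.2 ⟨1, h⟩) (tendsto_const_div_atTop_nhds_zero_nat c)

theorem mul_exp_neg_mul_log_eventuallyEq_div_rpow (a : ℕ → ℝ) (s : ℝ) :
    (fun n => a n * Real.exp (-s * Real.log n)) =ᶠ[atTop] fun n => a n / (n : ℝ) ^ s := by
  filter_upwards [eventually_gt_atTop 0] with n hn
  have hn' : (0 : ℝ) < n := Nat.cast_pos.2 hn
  rw [div_eq_mul_inv, ← Real.rpow_neg hn'.le, Real.rpow_def_of_pos hn', mul_comm (Real.log _)]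

theorem stmt13_general (F : Type*) [Field F] [Fintype F] :
    ∃ κ : ℝ, ∀ x : ℝ, 0 < x →
      Multipliable (fun P : {P : Polynomial F // P.Monic ∧ Irreducible P} =>
        (1 + (x - 1) / (Fintype.card F : ℝ) ^ (P : Polynomial F).natDegree) *
          Real.exp (-(x - 1) / (Fintype.card F : ℝ) ^ (P : Polynomial F).natDegree)) ∧
      ∀ φ : ℝ, Tendsto (fun n : ℕ =>
          ((∑ a : Fin n → F, x ^ omegaPoly (monicOf n a)) / (Fintype.card F : ℝ) ^ n) *
            Real.exp (-(x - 1) * Real.log n)) atTop (𝓝 φ) →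
        φ = Real.exp (κ * (x - 1)) / Real.Gamma x *
          ∏' P : {P : Polynomial F // P.Monic ∧ Irreducible P},
            (1 + (x - 1) / (Fintype.card F : ℝ) ^ (P : Polynomial F).natDegree) *
              Real.exp (-(x - 1) / (Fintype.card F : ℝ) ^ (P : Polynomial F).natDegree) := by
  refine ⟨Real.log (mertensProduct F), fun x hx => ?_⟩
  simp only [← weierstrassFactor_mul_irrWeight_one]
  refine ⟨multipliable_weierstrassFactor_irrWeight_one hx.le, fun φ hφ => ?_⟩
  have hlim := hφ.congr' (mul_exp_neg_mul_log_eventuallyEq_div_rpow (omegaPGF F x) (x - 1))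
  rw [← Real.rpow_def_of_pos mertensProduct_pos, div_mul_eq_mul_div, mul_comm (_ ^ _),
    eq_div_iff (Real.Gamma_pos_of_pos hx).ne', mul_Gamma_eq_of_tendsto_omegaPGF hx hlim]

/-- If `ω_q(Q_n)` (the number of distinct monic irreducible divisors of a uniformly random
monic polynomial of degree `n` over the finite field `F` with `q` elements) converges in
the mod-Poisson sense at speed `log n` with remainder `O_x(1/n)` to `Φ`, then necessarily
`Φ(x) = e^{κ(x−1)}/Γ(x) · ∏_P (1+(x−1)/q^{deg P}) e^{−(x−1)/q^{deg P}}` for some `κ ∈ ℝ`,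
the product running over all monic irreducible polynomials `P` and being convergent. -/
theorem stmt13 (F : Type*) [Field F] [Fintype F] (Φ : ℝ → ℝ)
    (h : ∀ x : ℝ, 0 < x → ∃ c : ℝ, ∀ n : ℕ, 1 ≤ n →
      |((∑ a : Fin n → F, x ^ omegaPoly (monicOf n a)) / (Fintype.card F : ℝ) ^ n) *
          Real.exp (-(x - 1) * Real.log n) - Φ x|
        ≤ c / n) :
    ∃ κ : ℝ, ∀ x : ℝ, 0 < x →
      Multipliable (fun P : {P : Polynomial F // P.Monic ∧ Irreducible P} =>
        (1 + (x - 1) / (Fintype.card F : ℝ) ^ (P : Polynomial F).natDegree) *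
          Real.exp (-(x - 1) / (Fintype.card F : ℝ) ^ (P : Polynomial F).natDegree)) ∧
      Φ x = Real.exp (κ * (x - 1)) / Real.Gamma x *
        ∏' P : {P : Polynomial F // P.Monic ∧ Irreducible P},
          (1 + (x - 1) / (Fintype.card F : ℝ) ^ (P : Polynomial F).natDegree) *
            Real.exp (-(x - 1) / (Fintype.card F : ℝ) ^ (P : Polynomial F).natDegree) := by
  obtain ⟨κ, hκ⟩ := stmt13_general F
  exact ⟨κ, fun x hx => (hκ x hx).imp_right fun hlim =>
    (h x hx).elim fun _ hc => hlim _ (tendsto_of_abs_sub_le_div hc)⟩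
end

section
/- Let α > 1, let Z_α^{(s)} have the distribution on squarefree positive integers given by P(Z_α^{(s)} = n) = 1/(n^α ζ_{N_s}(α)), and let d_α^{(s)} have the distribution P(d_α^{(s)} = n) = |N_s ∩ [1,n]| · (n^{−α} − (n+1)^{−α}) / ζ_{N_s}(α). Then both (α − 1) log Z_α^{(s)} and (α − 1) log d_α^{(s)} converge in distribution, as α → 1⁺, to the standard exponential distribution Exp(1). -/
open Filter

/-- `zetaSqf α = ∑_{n squarefree} n^{−α}`. -/
noncomputable def zetaSqf (α : ℝ) : ℝ :=
  ∑' n : ℕ, if Squarefree n then (n : ℝ) ^ (-α) else 0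

/-- `sqfCount n = |N_s ∩ [1,n]|`, the number of squarefree integers in `{1,…,n}`. -/
def sqfCount (n : ℕ) : ℕ := ((Finset.Icc 1 n).filter Squarefree).card

/-!
The exponential law is a change of variables in Abel summation. If `a` has summatory function `A`,
then `∑_{n ≤ x} a(n) n^{−α} = A(x) x^{−α} + α ∫₁ˣ A(u) u^{−α−1} du`. At `x = e^{t/(α−1)}` the
substitution `u = e^{v/(α−1)}` turns `α − 1` times the integral into
`∫₀ᵗ A(e^{v/(α−1)}) e^{−v/(α−1)} e^{−v} dv`, and when `A(u)/u → δ` dominated convergence gives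
`δ ∫₀ᵗ e^{−v} dv = δ (1 − e^{−t})` as `α → 1⁺`. Since `(α − 1) ∑ a(n) n^{−α} → δ`, the quotient
tends to the distribution function of `Exp(1)`. A discrete summation by parts shows that the delta
law differs from this one only by a boundary term, which vanishes in the limit. The squarefree
integers qualify with `δ = 6/π²`, by `∑_{d² ∣ n} μ(d) = 1` or `0` according as `n` is squarefree or
not, and Tannery's theorem.
-/

noncomputable section MeanValue

open Finset MeasureTheory Topology

/-- The summatory function `n ↦ ∑_{1 ≤ k ≤ n} a(k)` of a weight `a` on the positive integers, the
weighted form of `sqfCount`; the value `a 0` is left out. -/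
def summatory (a : ℕ → ℝ) (n : ℕ) : ℝ := ∑ k ∈ Icc 1 n, a k

/-- The Dirichlet series `∑ a(n) n^{−α}` at a real argument, the weighted form of `zetaSqf`. For
`α ≠ 0` the term `n = 0` vanishes because `0 ^ (-α) = 0`. -/
def dirichletSum (a : ℕ → ℝ) (α : ℝ) : ℝ := ∑' n : ℕ, a n * (n : ℝ) ^ (-α)

/-- The weight `a` has mean value `δ`. For the indicator of a set of positive integers, this says
that the set has natural density `δ`. -/
def HasMeanValue (a : ℕ → ℝ) (δ : ℝ) : Prop :=
  Tendsto (fun n : ℕ ↦ summatory a n / n) atTop (𝓝 δ)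

variable {a : ℕ → ℝ} {δ α t : ℝ}

lemma HasMeanValue.exists_abs_summatory_div_le (h : HasMeanValue a δ) :
    ∃ C, ∀ (n : ℕ) (x : ℝ), n ≤ x → |summatory a n / x| ≤ C := by
  obtain ⟨C, hC⟩ := isBounded_iff_forall_norm_le.1 (Metric.isBounded_range_of_tendsto _ h)
  refine ⟨C, fun n x hnx ↦ le_trans ?_ (hC _ ⟨n, rfl⟩)⟩
  rcases n.eq_zero_or_pos with rfl | hn
  · simp [summatory]
  · have hn' : (0 : ℝ) < n := Nat.cast_pos.2 hn
    rw [Real.norm_eq_abs, abs_div, abs_div, abs_of_pos hn', abs_of_pos (hn'.trans_le hnx)]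
    gcongr

lemma HasMeanValue.tendsto_summatory_floor_div (h : HasMeanValue a δ) :
    Tendsto (fun x : ℝ ↦ summatory a ⌊x⌋₊ / x) atTop (𝓝 δ) := by
  have := (h.comp tendsto_nat_floor_atTop).mul (tendsto_nat_floor_div_atTop (R := ℝ))
  rw [mul_one] at this
  refine this.congr' ?_
  filter_upwards [eventually_ge_atTop 1] with x hx
  have : (⌊x⌋₊ : ℝ) ≠ 0 := Nat.cast_ne_zero.2 (Nat.floor_pos.2 hx).ne'
  exact div_mul_div_cancel₀ this

lemma tendsto_sub_one_nhdsGT_one : Tendsto (fun α : ℝ ↦ α - 1) (𝓝[>] 1) (𝓝[>] 0) := by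
  refine tendsto_nhdsWithin_iff.2 ⟨tendsto_nhdsWithin_of_tendsto_nhds ?_, ?_⟩
  · exact Continuous.tendsto' (by fun_prop) _ _ (sub_self 1)
  · filter_upwards [self_mem_nhdsWithin] with α (hα : 1 < α) using sub_pos.2 hα

lemma HasMeanValue.tendsto_sub_one_mul_summatory_mul_rpow_neg (h : HasMeanValue a δ)
    {N : ℝ → ℕ} {x : ℝ → ℝ} (hN : ∀ α, N α ≤ x α) (hx : ∀ᶠ α in 𝓝[>] 1, 1 ≤ x α) :
    Tendsto (fun α ↦ (α - 1) * (summatory a (N α) * x α ^ (-α))) (𝓝[>] 1) (𝓝 0) := by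
  obtain ⟨C, hC⟩ := h.exists_abs_summatory_div_le
  have hα : Tendsto (fun α : ℝ ↦ α - 1) (𝓝[>] 1) (𝓝 0) :=
    tendsto_sub_one_nhdsGT_one.mono_right nhdsWithin_le_nhds
  refine hα.zero_mul_isBoundedUnder_le ⟨C, ?_⟩
  rw [eventually_map]
  filter_upwards [hx, self_mem_nhdsWithin] with α hx (hα : 1 < α)
  have hx₀ : 0 < x α := zero_lt_one.trans_le hx
  calc |summatory a (N α) * x α ^ (-α)|
      = |summatory a (N α) / x α| * x α ^ (1 - α) := by
        rw [← abs_of_pos (Real.rpow_pos_of_pos hx₀ (1 - α)), ← abs_mul, sub_eq_add_neg,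
          Real.rpow_add hx₀, Real.rpow_one]
        field_simp
    _ ≤ |summatory a (N α) / x α| * 1 := by
        gcongr
        exact Real.rpow_le_one_of_one_le_of_nonpos hx (by linarith)
    _ ≤ C := by simpa using hC _ _ (hN α)

lemma sum_mul_rpow_neg_eq_add_integral (a : ℕ → ℝ) (s : ℝ) {x : ℝ} (hx : 1 ≤ x) :
    ∑ k ∈ Icc 1 ⌊x⌋₊, a k * (k : ℝ) ^ (-s) =
      summatory a ⌊x⌋₊ * x ^ (-s) + s * ∫ u in 1..x, summatory a ⌊u⌋₊ * u ^ (-s - 1) := by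
  -- Mathlib's summation by parts starts at `0`.
  let c : ℕ → ℝ := fun k ↦ if k = 0 then 0 else a k
  have sum_c (f : ℕ → ℝ) (n : ℕ) : ∑ k ∈ Icc 0 n, f k * c k = ∑ k ∈ Icc 1 n, a k * f k := by
    rw [← sum_erase (Icc 0 n) (a := 0) (by simp [c])]
    refine sum_congr (by grind) fun k hk ↦ ?_
    grind
  have sum_c' (n : ℕ) : ∑ k ∈ Icc 0 n, c k = summatory a n := by
    simpa [summatory] using sum_c 1 n
  have hderiv : ∀ u ∈ Set.Icc 1 x, HasDerivAt (fun u : ℝ ↦ u ^ (-s)) (-s * u ^ (-s - 1)) u :=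
    fun u hu ↦ Real.hasDerivAt_rpow_const (.inl (zero_lt_one.trans_le hu.1).ne')
  have hcont : ContinuousOn (fun u : ℝ ↦ -s * u ^ (-s - 1)) (Set.Icc 1 x) := fun u hu ↦
    (continuousAt_const.mul (Real.continuousAt_rpow_const _ _
      (.inl (zero_lt_one.trans_le hu.1).ne'))).continuousWithinAt
  have habel := sum_mul_eq_sub_integral_mul₀ c rfl x (fun u hu ↦ (hderiv u hu).differentiableAt)
    ((integrableOn_congr_fun (fun u hu ↦ (hderiv u hu).deriv) measurableSet_Icc).2
      hcont.integrableOn_Icc)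
  rw [← sum_c, habel, sum_c', mul_comm (x ^ (-s)), sub_eq_add_neg,
    intervalIntegral.integral_of_le hx, ← integral_const_mul, ← integral_neg]
  congr 1
  refine setIntegral_congr_fun measurableSet_Ioc fun u hu ↦ ?_
  simp only [(hderiv u (Set.Ioc_subset_Icc_self hu)).deriv, sum_c']
  ring

lemma sub_one_mul_sum_mul_rpow_neg_eq_add_integral_exp (a : ℕ → ℝ) (hα : 1 < α) (ht : 0 ≤ t) :
    (α - 1) * ∑ k ∈ Icc 1 ⌊Real.exp (t / (α - 1))⌋₊, a k * (k : ℝ) ^ (-α) =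
      (α - 1) * (summatory a ⌊Real.exp (t / (α - 1))⌋₊ * Real.exp (t / (α - 1)) ^ (-α)) +
        α * ∫ v in 0..t, summatory a ⌊Real.exp (v / (α - 1))⌋₊ / Real.exp (v / (α - 1)) *
          Real.exp (-v) := by
  have hα₀ : 0 < α - 1 := sub_pos.2 hα
  have hsubst := intervalIntegral.integral_comp_mul_deriv_of_deriv_nonneg (a := 0) (b := t)
    (f := fun v ↦ Real.exp (v / (α - 1))) (f' := fun v ↦ Real.exp (v / (α - 1)) / (α - 1))
    (g := fun u ↦ summatory a ⌊u⌋₊ * u ^ (-α - 1)) (by fun_prop)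
    (fun v _ ↦ by simpa [div_eq_mul_inv] using ((hasDerivAt_id v).div_const (α - 1)).exp)
    (fun v _ ↦ by positivity)
  rw [zero_div, Real.exp_zero] at hsubst
  rw [sum_mul_rpow_neg_eq_add_integral a α (Real.one_le_exp (by positivity)), mul_add, ← hsubst,
    mul_left_comm (α - 1) α, ← intervalIntegral.integral_const_mul (α - 1)]
  congr 3 with v
  have hexp : Real.exp (v / (α - 1)) ^ (-α - 1) =
      Real.exp (-v) / (Real.exp (v / (α - 1)) * Real.exp (v / (α - 1))) := by
    rw [← Real.exp_mul, ← Real.exp_add, ← Real.exp_sub]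
    congr 1
    field_simp
    ring
  simp only [Function.comp_apply, hexp]
  field_simp

lemma tendsto_integral_comp_exp_div_mul_exp_neg {g : ℝ → ℝ} (hg : Measurable g) {C : ℝ}
    (hC : ∀ x, 0 ≤ x → |g x| ≤ C) (hlim : Tendsto g atTop (𝓝 δ)) (ht : 0 ≤ t) :
    Tendsto (fun c ↦ ∫ v in 0..t, g (Real.exp (v / c)) * Real.exp (-v)) (𝓝[>] 0)
      (𝓝 (δ * (1 - Real.exp (-t)))) := by
  have hint : ∫ v in 0..t, δ * Real.exp (-v) = δ * (1 - Real.exp (-t)) := by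
    simp [intervalIntegral.integral_comp_neg (fun v ↦ Real.exp v)]
  rw [← hint]
  refine intervalIntegral.tendsto_integral_filter_of_dominated_convergence
    (fun v ↦ C * Real.exp (-v)) ?_ ?_ ?_ ?_
  · exact .of_forall fun c ↦ Measurable.aestronglyMeasurable (by fun_prop)
  · refine .of_forall fun c ↦ .of_forall fun v _ ↦ ?_
    rw [norm_mul, Real.norm_eq_abs, Real.norm_of_nonneg (Real.exp_nonneg _)]
    gcongr
    exact hC _ (Real.exp_nonneg _)
  · exact Continuous.intervalIntegrable (by fun_prop) _ _
  · refine .of_forall fun v hv ↦ (hlim.comp ?_).mul_const _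
    rw [Set.uIoc_of_le ht] at hv
    exact Real.tendsto_exp_atTop.comp (tendsto_inv_nhdsGT_zero.const_mul_atTop hv.1)

lemma HasMeanValue.tendsto_sub_one_mul_sum_floor_exp (h : HasMeanValue a δ) (ht : 0 ≤ t) :
    Tendsto (fun α ↦ (α - 1) * ∑ k ∈ Icc 1 ⌊Real.exp (t / (α - 1))⌋₊, a k * (k : ℝ) ^ (-α))
      (𝓝[>] 1) (𝓝 (δ * (1 - Real.exp (-t)))) := by
  obtain ⟨C, hC⟩ := h.exists_abs_summatory_div_le
  have hmeas : Measurable fun x : ℝ ↦ summatory a ⌊x⌋₊ / x :=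
    ((measurable_from_top (f := summatory a)).comp Nat.measurable_floor).div measurable_id
  have hboundary := h.tendsto_sub_one_mul_summatory_mul_rpow_neg
    (N := fun α ↦ ⌊Real.exp (t / (α - 1))⌋₊) (x := fun α ↦ Real.exp (t / (α - 1)))
    (fun α ↦ Nat.floor_le (Real.exp_nonneg _)) <| by
      filter_upwards [self_mem_nhdsWithin] with α (hα : 1 < α)
      exact Real.one_le_exp (div_nonneg ht (sub_nonneg.2 hα.le))
  have hintegral := (tendsto_integral_comp_exp_div_mul_exp_neg hmeas
    (fun x hx ↦ hC _ x (Nat.floor_le hx)) h.tendsto_summatory_floor_div ht).comp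
      tendsto_sub_one_nhdsGT_one
  have hα : Tendsto (fun α : ℝ ↦ α) (𝓝[>] 1) (𝓝 1) := tendsto_id.mono_right nhdsWithin_le_nhds
  have hlim := hboundary.add (hα.mul hintegral)
  rw [zero_add, one_mul] at hlim
  refine hlim.congr' ?_
  filter_upwards [self_mem_nhdsWithin] with α hα
  exact (sub_one_mul_sum_mul_rpow_neg_eq_add_integral_exp a hα ht).symm

lemma HasMeanValue.tendsto_sub_one_mul_dirichletSum (h : HasMeanValue a δ) (ha : ∀ n, 0 ≤ a n) :
    Tendsto (fun α ↦ (α - 1) * dirichletSum a α) (𝓝[>] 1) (𝓝 δ) := by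
  have hL := LSeries_tendsto_sub_mul_nhds_one_of_tendsto_sum_div_and_nonneg a h ha
  refine tendsto_ofReal_iff.1 (hL.congr' ?_)
  filter_upwards [self_mem_nhdsWithin] with α (hα : 1 < α)
  have hα₀ : -α ≠ 0 := by linarith
  rw [dirichletSum, Complex.ofReal_mul, Complex.ofReal_tsum]
  push_cast
  congr 1
  refine tsum_congr fun n ↦ ?_
  rcases n.eq_zero_or_pos with rfl | hn
  · simp [Real.zero_rpow hα₀]
  · rw [LSeries.term_of_ne_zero hn.ne', Complex.ofReal_cpow (Nat.cast_nonneg n)]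
    simp [div_eq_mul_inv, Complex.cpow_neg]

lemma tsum_ite_mul_log_le (f : ℕ → ℝ) (hα : 1 < α) (t : ℝ) :
    ∑' n : ℕ, (if (α - 1) * Real.log ((n : ℝ) + 1) ≤ t then f (n + 1) else 0) =
      ∑ k ∈ Icc 1 ⌊Real.exp (t / (α - 1))⌋₊, f k := by
  have hmem (n : ℕ) :
      (α - 1) * Real.log ((n : ℝ) + 1) ≤ t ↔ n ∈ range ⌊Real.exp (t / (α - 1))⌋₊ := by
    rw [mem_range, ← Nat.succ_le_iff, Nat.le_floor_iff (Real.exp_nonneg _), mul_comm,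
      ← le_div_iff₀ (sub_pos.2 hα), Real.log_le_iff_le_exp (by positivity), Nat.cast_succ]
  simp only [hmem]
  rw [tsum_eq_sum fun n hn ↦ if_neg hn, sum_congr rfl fun n hn ↦ if_pos hn, range_eq_Ico,
    sum_Ico_add' f]
  rfl

lemma sum_Icc_summatory_mul_sub_succ (a f : ℕ → ℝ) (N : ℕ) :
    ∑ n ∈ Icc 1 N, summatory a n * (f n - f (n + 1)) =
      ∑ k ∈ Icc 1 N, a k * f k - summatory a N * f (N + 1) := by
  induction N with
  | zero => simp [summatory]
  | succ N ih =>
    have hsucc : summatory a (N + 1) = summatory a N + a (N + 1) :=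
      sum_Icc_succ_top (Nat.le_add_left 1 N) a
    rw [sum_Icc_succ_top (Nat.le_add_left 1 N), sum_Icc_succ_top (Nat.le_add_left 1 N), ih, hsucc]
    ring

lemma HasMeanValue.tendsto_zeta_cdf (hmean : HasMeanValue a δ) (ha : ∀ n, 0 ≤ a n) (hδ : δ ≠ 0)
    (ht : 0 ≤ t) :
    Tendsto (fun α : ℝ ↦ ∑' n : ℕ, if (α - 1) * Real.log ((n : ℝ) + 1) ≤ t then
        a (n + 1) * ((n : ℝ) + 1) ^ (-α) / dirichletSum a α else 0)
      (𝓝[>] 1) (𝓝 (1 - Real.exp (-t))) := by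
  have hlim := (hmean.tendsto_sub_one_mul_sum_floor_exp ht).div
    (hmean.tendsto_sub_one_mul_dirichletSum ha) hδ
  rw [mul_div_cancel_left₀ _ hδ] at hlim
  refine hlim.congr' ?_
  filter_upwards [self_mem_nhdsWithin] with α (hα : 1 < α)
  have htsum := tsum_ite_mul_log_le (fun n ↦ a n * (n : ℝ) ^ (-α) / dirichletSum a α) hα t
  push_cast at htsum
  rw [htsum, Pi.div_apply, mul_div_mul_left _ _ (sub_pos.2 hα).ne', sum_div]

lemma HasMeanValue.tendsto_deltaZeta_cdf (hmean : HasMeanValue a δ) (ha : ∀ n, 0 ≤ a n)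
    (hδ : δ ≠ 0) (ht : 0 ≤ t) :
    Tendsto (fun α : ℝ ↦ ∑' n : ℕ, if (α - 1) * Real.log ((n : ℝ) + 1) ≤ t then
        summatory a (n + 1) * (((n : ℝ) + 1) ^ (-α) - ((n : ℝ) + 2) ^ (-α)) / dirichletSum a α
        else 0)
      (𝓝[>] 1) (𝓝 (1 - Real.exp (-t))) := by
  have hboundary := hmean.tendsto_sub_one_mul_summatory_mul_rpow_neg
    (N := fun α ↦ ⌊Real.exp (t / (α - 1))⌋₊)
    (x := fun α ↦ ((⌊Real.exp (t / (α - 1))⌋₊ + 1 : ℕ) : ℝ))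
    (fun α ↦ by simp) (.of_forall fun α ↦ by simp)
  have hlim := ((hmean.tendsto_sub_one_mul_sum_floor_exp ht).sub hboundary).div
    (hmean.tendsto_sub_one_mul_dirichletSum ha) hδ
  rw [sub_zero, mul_div_cancel_left₀ _ hδ] at hlim
  refine hlim.congr' ?_
  filter_upwards [self_mem_nhdsWithin] with α (hα : 1 < α)
  have htsum := tsum_ite_mul_log_le (fun n ↦ summatory a n *
    ((n : ℝ) ^ (-α) - ((n + 1 : ℕ) : ℝ) ^ (-α)) / dirichletSum a α) hα t
  push_cast [add_assoc, one_add_one_eq_two] at htsum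
  rw [htsum, Pi.div_apply, ← mul_sub, mul_div_mul_left _ _ (sub_pos.2 hα).ne',
    ← sum_Icc_summatory_mul_sub_succ a (fun n ↦ (n : ℝ) ^ (-α)), sum_div]
  simp only [Nat.cast_succ]

end MeanValue

section SquarefreeDensity

open ArithmeticFunction Finset Topology
open scoped ArithmeticFunction.Moebius

lemma sq_dvd_sq_mul_iff_of_squarefree {a : ℕ} (ha : Squarefree a) {d b : ℕ} :
    d ^ 2 ∣ b ^ 2 * a ↔ d ∣ b := by
  rcases eq_or_ne b 0 with rfl | hb
  · simp
  refine ⟨fun h ↦ ?_, fun h ↦ (pow_dvd_pow_of_dvd h 2).mul_right a⟩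
  have hba : b ^ 2 * a ≠ 0 := mul_ne_zero (pow_ne_zero 2 hb) ha.ne_zero
  have hd : d ≠ 0 := by rintro rfl; simp_all
  rw [← Nat.factorization_le_iff_dvd (pow_ne_zero 2 hd) hba] at h
  rw [← Nat.factorization_le_iff_dvd hd hb]
  intro p
  have hp := h p
  have ha' := ha.natFactorization_le_one p
  rw [Nat.factorization_mul (pow_ne_zero 2 hb) ha.ne_zero] at hp
  simp only [Nat.factorization_pow, Finsupp.coe_add, Finsupp.coe_smul, Pi.add_apply, Pi.smul_apply,
    smul_eq_mul] at hp
  omega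

lemma sum_moebius_of_sq_dvd (n : ℕ) :
    ∑ d ∈ n.divisors with d ^ 2 ∣ n, μ d = if Squarefree n then 1 else 0 := by
  rcases eq_or_ne n 0 with rfl | hn
  · simp
  obtain ⟨a, b, rfl, ha⟩ := Nat.sq_mul_squarefree n
  have hb : b ≠ 0 := by rintro rfl; simp at hn
  have hdivisors : {d ∈ (b ^ 2 * a).divisors | d ^ 2 ∣ b ^ 2 * a} = b.divisors := by
    ext d
    rw [mem_filter, Nat.mem_divisors, Nat.mem_divisors, sq_dvd_sq_mul_iff_of_squarefree ha]
    exact ⟨fun h ↦ ⟨h.2, hb⟩,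
      fun h ↦ ⟨⟨(h.1.trans (dvd_pow_self b two_ne_zero)).mul_right a, hn⟩, h.1⟩⟩
  have hsquarefree : Squarefree (b ^ 2 * a) ↔ b = 1 := by
    refine ⟨fun h ↦ Nat.isUnit_iff.1 (h b ⟨a, by ring⟩), ?_⟩
    rintro rfl
    simpa using ha
  rw [hdivisors, ← coe_mul_zeta_apply, moebius_mul_coe_zeta, one_apply]
  simp only [hsquarefree]

lemma sqfCount_eq_sum_moebius (N : ℕ) :
    (sqfCount N : ℤ) = ∑ d ∈ Icc 1 N, μ d * (N / d ^ 2 : ℕ) := by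
  calc (sqfCount N : ℤ)
      = ∑ n ∈ Icc 1 N, ∑ d ∈ n.divisors with d ^ 2 ∣ n, μ d := by
        rw [sqfCount, card_filter, Nat.cast_sum]
        refine sum_congr rfl fun n _ ↦ ?_
        rw [sum_moebius_of_sq_dvd, Nat.cast_ite, Nat.cast_one, Nat.cast_zero]
    _ = ∑ d ∈ Icc 1 N, ∑ n ∈ Icc 1 N with d ^ 2 ∣ n, μ d := by
        refine sum_comm' fun n d ↦ ?_
        simp only [mem_filter, Nat.mem_divisors, mem_Icc]
        constructor
        · rintro ⟨hn, ⟨hdn, -⟩, hd⟩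
          exact ⟨⟨hn, hd⟩, Nat.pos_of_dvd_of_pos hdn hn.1, (Nat.le_of_dvd hn.1 hdn).trans hn.2⟩
        · rintro ⟨⟨hn, hd⟩, -⟩
          exact ⟨hn, ⟨(dvd_pow_self d two_ne_zero).trans hd, by omega⟩, hd⟩
    _ = ∑ d ∈ Icc 1 N, μ d * (N / d ^ 2 : ℕ) := by
        refine sum_congr rfl fun d _ ↦ ?_
        rw [sum_const, nsmul_eq_mul, mul_comm]
        congr 2
        exact Nat.Ioc_filter_dvd_card_eq_div N (d ^ 2)

lemma tsum_moebius_div_sq : ∑' d : ℕ, (μ d : ℝ) / d ^ 2 = 6 / Real.pi ^ 2 := by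
  have hL : LSeries (fun d ↦ (μ d : ℂ)) 2 = ((∑' d : ℕ, (μ d : ℝ) / d ^ 2 : ℝ) : ℂ) := by
    rw [LSeries, Complex.ofReal_tsum]
    refine tsum_congr fun d ↦ ?_
    rw [LSeries.term_def₀ (by simp)]
    simp [Complex.cpow_neg, div_eq_mul_inv]
  have hinv := LSeries_one_mul_Lseries_moebius (s := 2) (by norm_num)
  rw [hL, LSeries_one_eq_riemannZeta (by norm_num), riemannZeta_two] at hinv
  have hinv' : Real.pi ^ 2 / 6 * ∑' d : ℕ, (μ d : ℝ) / d ^ 2 = 1 := by exact_mod_cast hinv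
  have := Real.pi_ne_zero
  field_simp at hinv' ⊢
  linarith

lemma sqfCount_div_eq_tsum (N : ℕ) :
    (sqfCount N : ℝ) / N = ∑' d : ℕ, (μ d : ℝ) * ((N / d ^ 2 : ℕ) / N) := by
  rw [tsum_eq_sum (s := Icc 1 N), ← Int.cast_natCast, sqfCount_eq_sum_moebius]
  · push_cast
    rw [sum_div]
    exact sum_congr rfl fun d _ ↦ mul_div_assoc _ _ _
  · intro d hd
    rcases d.eq_zero_or_pos with rfl | hd₀
    · simp
    · have hNd : N < d := by grind
      simp [Nat.div_eq_of_lt (hNd.trans_le (Nat.le_self_pow two_ne_zero d))]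

lemma tendsto_sqfCount_div :
    Tendsto (fun N : ℕ ↦ (sqfCount N : ℝ) / N) atTop (𝓝 (6 / Real.pi ^ 2)) := by
  simp only [sqfCount_div_eq_tsum]
  rw [← tsum_moebius_div_sq]
  refine tendsto_tsum_of_dominated_convergence
    (Real.summable_one_div_nat_pow.2 one_lt_two) (fun d ↦ ?_) (.of_forall fun N d ↦ ?_)
  · have hfloor : Tendsto (fun N : ℕ ↦ ((N / d ^ 2 : ℕ) : ℝ) / N) atTop (𝓝 (1 / (d : ℝ) ^ 2)) := by
      refine ((tendsto_nat_floor_mul_div_atTop (by positivity)).comp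
        tendsto_natCast_atTop_atTop).congr fun N ↦ ?_
      rw [Function.comp_apply, one_div_mul_eq_div, ← Nat.cast_pow, Nat.floor_div_eq_div]
    rw [div_eq_mul_one_div]
    exact hfloor.const_mul _
  · have hmu : |(μ d : ℝ)| ≤ 1 := mod_cast abs_moebius_le_one
    have hdiv : ((N / d ^ 2 : ℕ) : ℝ) / N ≤ 1 / (d : ℝ) ^ 2 := by
      refine div_le_of_le_mul₀ (by positivity) (by positivity) ?_
      rw [one_div_mul_eq_div]
      exact_mod_cast Nat.cast_div_le
    rw [norm_mul, Real.norm_eq_abs, Real.norm_of_nonneg (by positivity)]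
    exact (mul_le_of_le_one_left (by positivity) hmu).trans hdiv

lemma hasMeanValue_squarefree :
    HasMeanValue (fun n ↦ if Squarefree n then 1 else 0) (6 / Real.pi ^ 2) := by
  simpa [HasMeanValue, summatory, sqfCount] using tendsto_sqfCount_div

end SquarefreeDensity

theorem stmt18_general {a : ℕ → ℝ} {δ : ℝ} (hmean : HasMeanValue a δ) (ha : ∀ n, 0 ≤ a n)
    (hδ : δ ≠ 0) {t : ℝ} (ht : 0 ≤ t) :
    Tendsto (fun α : ℝ ↦
        ∑' n : ℕ, if (α - 1) * Real.log ((n : ℝ) + 1) ≤ t then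
          a (n + 1) * ((n : ℝ) + 1) ^ (-α) / dirichletSum a α else 0)
      (nhdsWithin 1 (Set.Ioi 1)) (nhds (1 - Real.exp (-t))) ∧
    Tendsto (fun α : ℝ ↦
        ∑' n : ℕ, if (α - 1) * Real.log ((n : ℝ) + 1) ≤ t then
          summatory a (n + 1) * (((n : ℝ) + 1) ^ (-α) - ((n : ℝ) + 2) ^ (-α)) / dirichletSum a α
        else 0)
      (nhdsWithin 1 (Set.Ioi 1)) (nhds (1 - Real.exp (-t))) :=
  ⟨hmean.tendsto_zeta_cdf ha hδ ht, hmean.tendsto_deltaZeta_cdf ha hδ ht⟩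

/-- If `Z_α^{(s)}` has the squarefree Zeta distribution
(`P(Z = n) = 1/(n^α ζ_{N_s}(α))` for squarefree `n`) and `d_α^{(s)}` the squarefree
delta-Zeta distribution (`P(d = n) = |N_s ∩ [1,n]| (n^{−α} − (n+1)^{−α})/ζ_{N_s}(α)`),
then both `(α−1) log Z_α^{(s)}` and `(α−1) log d_α^{(s)}` converge in distribution to
`Exp(1)` as `α → 1⁺`. -/
theorem stmt18 (t : ℝ) (ht : 0 ≤ t) :
    Tendsto (fun α : ℝ =>
        ∑' n : ℕ, if Squarefree (n + 1) ∧ (α - 1) * Real.log ((n : ℝ) + 1) ≤ t then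
          ((n : ℝ) + 1) ^ (-α) / zetaSqf α else 0)
      (nhdsWithin 1 (Set.Ioi 1)) (nhds (1 - Real.exp (-t))) ∧
    Tendsto (fun α : ℝ =>
        ∑' n : ℕ, if (α - 1) * Real.log ((n : ℝ) + 1) ≤ t then
          (sqfCount (n + 1) : ℝ) * (((n : ℝ) + 1) ^ (-α) - ((n : ℝ) + 2) ^ (-α)) / zetaSqf α
        else 0)
      (nhdsWithin 1 (Set.Ioi 1)) (nhds (1 - Real.exp (-t))) := by
  have := stmt18_general hasMeanValue_squarefree (fun n ↦ by positivity) (by positivity) ht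
  simpa [zetaSqf, sqfCount, summatory, dirichletSum, and_comm (a := Squarefree _), ite_and, ite_div]
    using this
end
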